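/- (Inductive deformation lemma) Let P₁,…,P₆ be six planes in general position in P³(ℂ) with equations p_i = 0. Let Δ_k be a collection of k double lines of the configuration, let D = P_{i₁} ∩ P_{i₂} be an additional double line, and set Δ_{k+1} = Δ_k ∪ D. Suppose S_k = (s_k = 0) is a sextic in general position with respect to the planes such that for every i the complement P_i \ (∪_{j≠i} P_j \ (Δ_k ∩ S_k)) is hyperbolic. Then for all sufficiently small ε_k ≠ 0, the sextic S_{k+1} = (p_{i₃} p_{i₄} p_{i₅}² p_{i₆}² = ε_k s_k) is such that for every i the complement P_i \ (∪_{j≠i} P_j \ (Δ_{k+1} ∩ S_{k+1})) is hyperbolic. -/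

import Mathlib

/- The inductive deformation lemma of Zaidenberg's method.

Six planes `P i = (p i = 0)` in general position (no quadruple point) in
`P³(ℂ) = Projectivization ℂ (Fin 4 → ℂ)` are given by nonzero homogeneous degree-1
polynomials.  A double line of the configuration is `P i ∩ P j`, `i ≠ j`, encoded by the
unordered pair `s(i, j) : Sym2 (Fin 6)`; `Δ` is a collection of `k` double lines, and
`D = P (σ 0) ∩ P (σ 1)` is an extra one, where `σ` is a permutation of the indices
(`{i₁, …, i₆} = {1, …, 6}`).  A sextic `(sk = 0)` is in general position with respect
to the planes if it avoids the triple points.  The complement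
`P i \ (⋃_{j ≠ i} P j \ (Δ ∩ S))` is hyperbolic if every holomorphic map `f : ℂ → P³(ℂ)`
(holomorphy via local nonvanishing holomorphic lifts, `HoloToProj`) with image in `P i`
and meeting the other planes only at points of `Δ ∩ S` is constant; membership is
tested on representatives, all conditions being homogeneous hence scale invariant. -/

open Metric Filter MvPolynomial
open scoped Topology

noncomputable section

/-- A map from `ℂ` to a projective space is holomorphic if it locally admits nonvanishing
holomorphic lifts. -/
def HoloToProj {m : ℕ} (f : ℂ → Projectivization ℂ (Fin m → ℂ)) : Prop :=
  ∀ z₀ : ℂ, ∃ W : Set ℂ, IsOpen W ∧ z₀ ∈ W ∧ ∃ F : ℂ → (Fin m → ℂ),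
    DifferentiableOn ℂ F W ∧ ∀ z ∈ W, ∃ h : F z ≠ 0, f z = Projectivization.mk ℂ (F z) h

/-! ### Holomorphic curves given by (non-continuous) vector representatives -/

/-- `γ` represents a holomorphic curve in projective space. -/
def HC {m : ℕ} (γ : ℂ → (Fin m → ℂ)) : Prop :=
  ∀ z₀ : ℂ, ∃ W : Set ℂ, IsOpen W ∧ z₀ ∈ W ∧ ∃ F : ℂ → (Fin m → ℂ),
    DifferentiableOn ℂ F W ∧ ∀ z ∈ W, F z ≠ 0 ∧ ∃ c : ℂ, c ≠ 0 ∧ γ z = c • F z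

/-- Proportional vectors. -/
def Par {m : ℕ} (v w : Fin m → ℂ) : Prop := ∀ a b, v a * w b = v b * w a

/-- The ball is mapped to a standard piece of an affine chart. -/
def Good {m : ℕ} (γ : ℂ → (Fin m → ℂ)) (z : ℂ) (r : ℝ) : Prop :=
  ∃ a, ∀ w ∈ ball z r, ∀ b, ‖γ w b‖ ≤ 2 * ‖γ w a‖

/-- The normalized affine lift. -/
def aff {m : ℕ} (γ : ℂ → (Fin m → ℂ)) (a : Fin m) (z : ℂ) : Fin m → ℂ := (γ z a)⁻¹ • γ z

lemma HC.ne_zero {m : ℕ} {γ : ℂ → (Fin m → ℂ)} (h : HC γ) (z : ℂ) : γ z ≠ 0 := by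
  obtain ⟨W, -, hz, F, -, hF⟩ := h z
  obtain ⟨h0, c, hc, he⟩ := hF z hz
  rw [he]
  exact smul_ne_zero hc h0

lemma coord_ne_zero {m : ℕ} {v : Fin m → ℂ} (hv : v ≠ 0) {a : Fin m} {C : ℝ}
    (h : ∀ b, ‖v b‖ ≤ C * ‖v a‖) : v a ≠ 0 := by
  intro h0
  apply hv
  funext b
  have := h b
  rw [h0] at this
  simpa using this

lemma aff_diff {m : ℕ} {γ : ℂ → (Fin m → ℂ)} (h : HC γ) {B : Set ℂ} {a : Fin m}
    (ha : ∀ z ∈ B, γ z a ≠ 0) : DifferentiableOn ℂ (aff γ a) B := by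
  intro z hz
  obtain ⟨W, hW, hzW, F, hFd, hF⟩ := h z
  have hFz : DifferentiableAt ℂ F z := (hFd z hzW).differentiableAt (hW.mem_nhds hzW)
  have hFa : F z a ≠ 0 := by
    obtain ⟨h0, c, hc, he⟩ := hF z hzW
    have := ha z hz
    rw [he] at this
    intro h1
    apply this
    simp [h1]
  have hd : DifferentiableAt ℂ (fun w => (F w a)⁻¹ • F w) z := by
    have : DifferentiableAt ℂ (fun w => F w a) z := (differentiableAt_pi.1 hFz) a
    exact (this.inv hFa).smul hFz
  refine DifferentiableAt.differentiableWithinAt (hd.congr_of_eventuallyEq ?_)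
  filter_upwards [hW.mem_nhds hzW] with w hw
  obtain ⟨h0, c, hc, he⟩ := hF w hw
  simp only [aff, he, Pi.smul_apply, smul_eq_mul, smul_smul, mul_inv]
  congr 1
  field_simp

lemma aff_par {m : ℕ} {v w : Fin m → ℂ} {a : Fin m} (hv : v a ≠ 0) (hw : w a ≠ 0)
    (h : (v a)⁻¹ • v = (w a)⁻¹ • w) : Par v w := by
  intro b c
  have hb := congrFun h b
  have hc := congrFun h c
  simp only [Pi.smul_apply, smul_eq_mul] at hb hc
  field_simp at hb hc
  have : v a * w a * (v b * w c) = v a * w a * (v c * w b) := by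
    linear_combination (v a * w c) * hb - (v a * w b) * hc
  exact mul_left_cancel₀ (mul_ne_zero hv hw) this

lemma aff_bound {m : ℕ} {γ : ℂ → (Fin m → ℂ)} {w : ℂ} {a : Fin m}
    (h : ∀ b, ‖γ w b‖ ≤ 2 * ‖γ w a‖) : ‖aff γ a w‖ ≤ 2 := by
  rw [pi_norm_le_iff_of_nonneg (by norm_num)]
  intro b
  simp only [aff, Pi.smul_apply, smul_eq_mul, norm_mul, norm_inv]
  by_cases h0 : γ w a = 0
  · simp [h0]
  · have : 0 < ‖γ w a‖ := norm_pos_iff.2 h0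
    rw [inv_mul_le_iff₀ this]
    linarith [h b]

lemma aff_self {m : ℕ} {γ : ℂ → (Fin m → ℂ)} {w : ℂ} {a : Fin m} (h : γ w a ≠ 0) :
    aff γ a w a = 1 := by
  simp [aff, h]

lemma Good.mono {m : ℕ} {γ : ℂ → (Fin m → ℂ)} {z w : ℂ} {r s : ℝ} (h : Good γ z r)
    (hs : ball w s ⊆ ball z r) : Good γ w s := by
  obtain ⟨a, ha⟩ := h
  exact ⟨a, fun x hx => ha x (hs hx)⟩

lemma exists_argmax {m : ℕ} {v : Fin m → ℂ} (hv : v ≠ 0) :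
    ∃ a, v a ≠ 0 ∧ ∀ b, ‖v b‖ ≤ ‖v a‖ := by
  obtain ⟨c, hc⟩ := Function.ne_iff.1 hv
  have : Nonempty (Fin m) := ⟨c⟩
  obtain ⟨a, ha⟩ := Finite.exists_max (fun b => ‖v b‖)
  refine ⟨a, ?_, ha⟩
  exact coord_ne_zero hv (C := 1) (by simpa using ha)

lemma exists_good {m : ℕ} {γ : ℂ → (Fin m → ℂ)} (h : HC γ) (z : ℂ) :
    ∃ t > 0, Good γ z t := by
  obtain ⟨W, hW, hz, F, hFd, hF⟩ := h z
  obtain ⟨a, ha, hmax⟩ := exists_argmax (hF z hz).1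
  have hc : ContinuousAt F z := ((hFd z hz).differentiableAt (hW.mem_nhds hz)).continuousAt
  have hcb : ∀ b, ContinuousAt (fun w => F w b) z := fun b => continuousAt_pi.1 hc b
  have key : ∀ᶠ w in 𝓝 z, ∀ b, ‖F w b‖ < 2 * ‖F w a‖ := by
    rw [eventually_all]
    intro b
    refine (hcb b).norm.eventually_lt ((hcb a).norm.const_mul 2) ?_
    have := norm_pos_iff.2 ha
    linarith [hmax b]
  obtain ⟨t, ht, hb⟩ := Metric.eventually_nhds_iff_ball.1 (key.and (hW.mem_nhds hz))
  refine ⟨t, ht, a, fun w hw b => ?_⟩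
  obtain ⟨h1, h2⟩ := hb w hw
  obtain ⟨-, c, hc, he⟩ := hF w h2
  rw [he]
  simp only [Pi.smul_apply, smul_eq_mul, norm_mul]
  nlinarith [h1 b, norm_nonneg c]

lemma const_of_good {m : ℕ} {γ : ℂ → (Fin m → ℂ)} (h : HC γ)
    (hg : ∀ r : ℝ, 0 < r → Good γ 0 r) : ∀ z w, Par (γ z) (γ w) := by
  have h1 : ∀ᶠ n : ℕ in (hyperfilter ℕ : Filter ℕ), ∃ a : Fin m,
      ∀ w ∈ ball (0:ℂ) (n + 1), ∀ b, ‖γ w b‖ ≤ 2 * ‖γ w a‖ :=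
    Eventually.of_forall fun n => hg (n + 1) (by positivity)
  rw [Ultrafilter.eventually_exists_iff] at h1
  obtain ⟨a, ha⟩ := h1
  have h2 : ∀ w b, ‖γ w b‖ ≤ 2 * ‖γ w a‖ := by
    intro w b
    have h3 : ∀ᶠ n : ℕ in (hyperfilter ℕ : Filter ℕ), ‖w‖ < n := by
      refine (Nat.hyperfilter_le_atTop) ?_
      exact tendsto_natCast_atTop_atTop.eventually_gt_atTop ‖w‖
    obtain ⟨n, hn, hn'⟩ := (ha.and h3).exists
    exact hn w (by simp; linarith) b
  have h0 : ∀ w, γ w a ≠ 0 := fun w => coord_ne_zero (h.ne_zero w) (h2 w)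
  have hd : Differentiable ℂ (aff γ a) :=
    differentiableOn_univ.1 (aff_diff h fun z _ => h0 z)
  intro z w
  refine aff_par (h0 z) (h0 w) ?_
  refine hd.apply_eq_apply_of_bounded ?_ z w
  rw [isBounded_iff_forall_norm_le]
  refine ⟨2, ?_⟩
  rintro _ ⟨x, rfl⟩
  exact aff_bound (h2 x)

lemma brody {m : ℕ} {γ : ℂ → (Fin m → ℂ)} (h : HC γ)
    (hn : ¬ ∀ z w, Par (γ z) (γ w)) (R : ℝ) :
    ∃ z : ℂ, ∃ s : ℝ, 0 < s ∧ ¬ Good γ z s ∧ ∀ w, dist w z < R * s → Good γ w (s / 2) := by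
  by_contra hcon
  push Not at hcon
  have h0 : ∃ r : ℝ, 0 < r ∧ ¬ Good γ 0 r := by
    by_contra h1
    push Not at h1
    exact hn (const_of_good h h1)
  obtain ⟨r, hr, hbad⟩ := h0
  have hcon' : ∀ z : ℂ, ∀ s : ℝ, ∃ w, 0 < s → ¬ Good γ z s →
      dist w z < R * s ∧ ¬ Good γ w (s / 2) := by
    intro z s
    by_cases h1 : 0 < s ∧ ¬ Good γ z s
    · obtain ⟨w, hw⟩ := hcon z s h1.1 h1.2
      exact ⟨w, fun _ _ => hw⟩
    · exact ⟨0, fun h2 h3 => (h1 ⟨h2, h3⟩).elim⟩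
  choose nx hnx using hcon'
  let x : ℕ → ℂ := fun n => Nat.rec 0 (fun k z => nx z (r / 2 ^ k)) n
  have hx : ∀ n, x (n + 1) = nx (x n) (r / 2 ^ n) := fun n => rfl
  have hb : ∀ n, ¬ Good γ (x n) (r / 2 ^ n) := by
    intro n
    induction n with
    | zero => simpa [x] using hbad
    | succ k ih =>
      have := (hnx (x k) (r / 2 ^ k) (by positivity) ih).2
      rw [hx, pow_succ, ← div_div]
      exact this
  have hd : ∀ n, dist (x n) (x (n + 1)) ≤ (2 * R * r) / 2 / 2 ^ n := by
    intro n
    have := (hnx (x n) (r / 2 ^ n) (by positivity) (hb n)).1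
    rw [dist_comm, hx]
    refine this.le.trans (le_of_eq ?_)
    ring
  obtain ⟨y, hy⟩ := cauchySeq_tendsto_of_complete (cauchySeq_of_le_geometric_two hd)
  obtain ⟨t, ht, hgood⟩ := exists_good h y
  have h1 : ∀ᶠ n in atTop, dist (x n) y < t / 2 := by
    have := Metric.tendsto_nhds.1 hy (t / 2) (by positivity)
    exact this
  have h2 : ∀ᶠ n : ℕ in atTop, r / 2 ^ n < t / 2 := by
    have : Tendsto (fun n : ℕ => r * (1 / 2 : ℝ) ^ n) atTop (𝓝 (r * 0)) :=
      (tendsto_pow_atTop_nhds_zero_of_lt_one (by norm_num) (by norm_num)).const_mul r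
    rw [mul_zero] at this
    filter_upwards [this.eventually_lt_const (show (0:ℝ) < t / 2 by positivity)] with n hn
    simpa [div_eq_mul_inv] using hn
  obtain ⟨n, hn1, hn2⟩ := (h1.and h2).exists
  refine hb n (hgood.mono ?_)
  apply ball_subset_ball'
  linarith

lemma HC.comp_affine {m : ℕ} {γ : ℂ → (Fin m → ℂ)} (h : HC γ) (z s : ℂ) :
    HC (fun ζ => γ (z + s * ζ)) := by
  intro ζ
  obtain ⟨W, hW, hz, F, hFd, hF⟩ := h (z + s * ζ)
  have hc : Continuous (fun ζ : ℂ => z + s * ζ) := by fun_prop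
  refine ⟨_, hW.preimage hc, hz, fun ζ => F (z + s * ζ), ?_, fun x hx => hF _ hx⟩
  refine DifferentiableOn.comp (t := W) (g := F) hFd (f := fun ζ => z + s * ζ) ?_ fun x hx => hx
  fun_prop

lemma brody_rescale {m : ℕ} {γ : ℂ → (Fin m → ℂ)} (h : HC γ)
    (hn : ¬ ∀ z w, Par (γ z) (γ w)) (R : ℝ) :
    ∃ z s : ℂ, ¬ Good (fun ζ => γ (z + s * ζ)) 0 1 ∧
      ∀ ζ, ‖ζ‖ < R → Good (fun ζ => γ (z + s * ζ)) ζ (1 / 2) := by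
  obtain ⟨z, s, hs, hb, hg⟩ := brody h hn R
  have hs' : (s : ℂ) ≠ 0 := by exact_mod_cast hs.ne'
  refine ⟨z, s, ?_, ?_⟩
  · rintro ⟨a, ha⟩
    apply hb
    refine ⟨a, fun w hw b => ?_⟩
    have := ha ((w - z) / s) ?_ b
    · simpa [mul_div_cancel₀ _ hs'] using this
    · rw [mem_ball, dist_eq_norm] at hw
      simp only [mem_ball, dist_zero_right, norm_div, Complex.norm_real, Real.norm_eq_abs,
        abs_of_pos hs]
      rwa [div_lt_one hs]
  · intro ζ hζ
    obtain ⟨a, ha⟩ := hg (z + s * ζ) (by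
      rw [dist_eq_norm]
      simp only [add_sub_cancel_left, norm_mul, Complex.norm_real, Real.norm_eq_abs, abs_of_pos hs]
      nlinarith)
    refine ⟨a, fun w hw b => ha _ ?_ b⟩
    rw [mem_ball, dist_eq_norm] at hw ⊢
    have : z + s * w - (z + s * ζ) = s * (w - ζ) := by ring
    rw [this, norm_mul, Complex.norm_real, Real.norm_eq_abs, abs_of_pos hs]
    nlinarith

/-! ### Limits along the hyperfilter -/

/-- A fixed nonprincipal ultrafilter on `ℕ`. -/
abbrev UU : Filter ℕ := (hyperfilter ℕ : Filter ℕ)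

/-- Locally uniform convergence of projective curves, in terms of local lifts. -/
def Conv {m : ℕ} (γ : ℕ → ℂ → (Fin m → ℂ)) (δ : ℂ → (Fin m → ℂ)) : Prop :=
  ∀ z₀ : ℂ, ∃ (u : ℕ → ℂ → (Fin m → ℂ)) (v : ℂ → (Fin m → ℂ)),
    (∀ᶠ n in UU, DifferentiableOn ℂ (u n) (ball z₀ (1 / 2)) ∧
      ∀ z ∈ ball z₀ (1 / 2), ∃ c : ℂ, c ≠ 0 ∧ γ n z = c • u n z) ∧
    TendstoLocallyUniformlyOn u v UU (ball z₀ (1 / 2)) ∧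
    DifferentiableOn ℂ v (ball z₀ (1 / 2)) ∧
    ∀ z ∈ ball z₀ (1 / 2), v z ≠ 0 ∧ ∃ c : ℂ, c ≠ 0 ∧ δ z = c • v z

lemma montel {E : Type*} [NormedAddCommGroup E] [NormedSpace ℂ E]
    {u : ℕ → ℂ → E} {v : ℂ → E} {z₀ : ℂ} {r C : ℝ}
    (hC : 0 ≤ C)
    (hd : ∀ᶠ n in UU, DifferentiableOn ℂ (u n) (ball z₀ r) ∧ ∀ z ∈ ball z₀ r, ‖u n z‖ ≤ C)
    (hl : ∀ z ∈ ball z₀ r, Tendsto (fun n => u n z) UU (𝓝 (v z))) :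
    TendstoLocallyUniformlyOn u v UU (ball z₀ r) := by
  rw [Metric.tendstoLocallyUniformlyOn_iff]
  intro ε hε x hx
  obtain ⟨t, ht, htb⟩ := Metric.isOpen_iff.1 isOpen_ball x hx
  set K : ℝ := 2 * C / t with hK
  have hK0 : 0 ≤ K := by positivity
  have hlip : ∀ᶠ n in UU, ∀ y ∈ ball x t, dist (u n y) (u n x) ≤ K * dist y x := by
    filter_upwards [hd] with n hn y hy
    refine Complex.dist_le_div_mul_dist_of_mapsTo_ball (hn.1.mono htb) ?_ hy
    intro w hw
    rw [mem_closedBall, dist_eq_norm]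
    refine (norm_sub_le _ _).trans ?_
    linarith [hn.2 w (htb hw), hn.2 x hx]
  have hlipv : ∀ y ∈ ball x t, dist (v y) (v x) ≤ K * dist y x := by
    intro y hy
    refine le_of_tendsto ((hl y (htb hy)).dist (hl x hx)) ?_
    filter_upwards [hlip] with n hn using hn y hy
  set s : ℝ := min t (ε / (4 * (K + 1))) with hs
  have hs0 : 0 < s := by positivity
  refine ⟨ball x s, mem_nhdsWithin_of_mem_nhds (ball_mem_nhds x hs0), ?_⟩
  filter_upwards [hlip, Metric.tendsto_nhds.1 (hl x hx) (ε / 4) (by positivity)] with n h1 h2 y hy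
  have hyt : y ∈ ball x t := ball_subset_ball (min_le_left _ _) hy
  have h3 : K * dist y x ≤ ε / 4 := by
    have h4 : dist y x ≤ ε / (4 * (K + 1)) := (le_of_lt hy).trans (min_le_right _ _)
    calc K * dist y x ≤ (K + 1) * (ε / (4 * (K + 1))) := by
          apply mul_le_mul (by linarith) h4 dist_nonneg (by linarith)
      _ = ε / 4 := by field_simp
  have h5 := h1 y hyt
  have h6 := hlipv y hyt
  have h7 : dist (v x) (u n x) < ε / 4 := by rw [dist_comm]; exact h2
  have h8 : dist (u n x) (u n y) ≤ K * dist y x := by rw [dist_comm]; exact h5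
  linarith [dist_triangle (v y) (v x) (u n y), dist_triangle (v x) (u n x) (u n y)]

lemma limit_exists {m : ℕ} (γ : ℕ → ℂ → (Fin m → ℂ)) (h : ∀ n, HC (γ n))
    (hb : ∀ n, ¬ Good (γ n) 0 1)
    (hg : ∀ n : ℕ, ∀ ζ : ℂ, ‖ζ‖ < n → Good (γ n) ζ (1 / 2)) :
    ∃ δ : ℂ → (Fin m → ℂ), HC δ ∧ (¬ ∀ z w, Par (δ z) (δ w)) ∧ Conv γ δ := by
  have hlarge : ∀ ζ : ℂ, ∀ᶠ n : ℕ in UU, ‖ζ‖ < n := fun ζ =>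
    Nat.hyperfilter_le_atTop (tendsto_natCast_atTop_atTop.eventually_gt_atTop ‖ζ‖)
  have h1 : ∀ z : ℂ, ∃ a : Fin m, ∀ᶠ n in UU,
      ∀ w ∈ ball z (1 / 2), ∀ b, ‖γ n w b‖ ≤ 2 * ‖γ n w a‖ := by
    intro z
    rw [← Ultrafilter.eventually_exists_iff]
    filter_upwards [hlarge z] with n hn using hg n z hn
  choose a ha using h1
  -- pointwise limits
  have h2 : ∀ z w : ℂ, ∃ l : Fin m → ℂ, w ∈ ball z (1 / 2) →
      Tendsto (fun n => aff (γ n) (a z) w) UU (𝓝 l) := by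
    intro z w
    by_cases hw : w ∈ ball z (1 / 2)
    · have hc : IsCompact (closedBall (0 : Fin m → ℂ) 2) := isCompact_closedBall _ _
      obtain ⟨l, -, hl⟩ := hc.ultrafilter_le_nhds
        ((hyperfilter ℕ).map (fun n => aff (γ n) (a z) w)) (by
          rw [le_principal_iff]
          change ∀ᶠ n in UU, aff (γ n) (a z) w ∈ closedBall 0 2
          filter_upwards [ha z] with n hn
          rw [mem_closedBall, dist_zero_right]
          exact aff_bound (hn w hw))
      exact ⟨l, fun _ => hl⟩
    · exact ⟨0, fun h => (hw h).elim⟩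
  choose v hv using h2
  have hne : ∀ z, ∀ᶠ n in UU, ∀ w ∈ ball z (1 / 2), γ n w (a z) ≠ 0 := by
    intro z
    filter_upwards [ha z] with n hn w hw using coord_ne_zero ((h n).ne_zero w) (hn w hw)
  have hv1 : ∀ z, ∀ w ∈ ball z (1 / 2), v z w (a z) = 1 := by
    intro z w hw
    have h3 : Tendsto (fun n => aff (γ n) (a z) w (a z)) UU (𝓝 (v z w (a z))) :=
      (tendsto_pi_nhds.1 (hv z w hw)) (a z)
    refine tendsto_nhds_unique h3 (tendsto_const_nhds.congr' ?_)
    filter_upwards [hne z] with n hn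
    exact (aff_self (hn w hw)).symm
  have hv0 : ∀ z, ∀ w ∈ ball z (1 / 2), v z w ≠ 0 := by
    intro z w hw h0
    have := hv1 z w hw
    rw [h0] at this
    simp at this
  have hself : ∀ z : ℂ, z ∈ ball z (1 / 2) := fun z => mem_ball_self (by norm_num)
  have hloc : ∀ z, TendstoLocallyUniformlyOn (fun n => aff (γ n) (a z)) (v z) UU
      (ball z (1 / 2)) := by
    intro z
    refine montel (C := 2) (by norm_num) ?_ (hv z)
    filter_upwards [ha z, hne z] with n hn hn'
    exact ⟨aff_diff (h n) hn', fun w hw => aff_bound (hn w hw)⟩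
  have hdiff : ∀ z, DifferentiableOn ℂ (v z) (ball z (1 / 2)) := by
    intro z
    refine (hloc z).differentiableOn ?_ isOpen_ball
    filter_upwards [hne z] with n hn' using aff_diff (h n) hn'
  have hcomp : ∀ z, ∀ w ∈ ball z (1 / 2), ∃ c : ℂ, c ≠ 0 ∧ v w w = c • v z w := by
    intro z w hw
    have heq : v w w = (v w w (a z)) • v z w := by
      refine tendsto_nhds_unique (hv w w (hself w)) ?_
      have h3 : Tendsto (fun n => aff (γ n) (a w) w (a z)) UU (𝓝 (v w w (a z))) :=
        (tendsto_pi_nhds.1 (hv w w (hself w))) (a z)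
      refine (h3.smul (hv z w hw)).congr' ?_
      filter_upwards [hne z] with n hn
      have := hn w hw
      simp only [aff, Pi.smul_apply, smul_eq_mul, smul_smul]
      congr 1
      field_simp
    refine ⟨v w w (a z), ?_, heq⟩
    intro h0
    rw [h0, zero_smul] at heq
    exact hv0 w w (hself w) heq
  refine ⟨fun z => v z z, ?_, ?_, ?_⟩
  · intro z
    exact ⟨ball z (1 / 2), isOpen_ball, hself z, v z, hdiff z,
      fun w hw => ⟨hv0 z w hw, hcomp z w hw⟩⟩
  · intro hconst
    obtain ⟨c, hc0, hc⟩ := exists_argmax (hv0 0 0 (hself 0))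
    have h3 : ∀ n, ∃ w ∈ ball (0 : ℂ) 1, ∃ b, 2 * ‖γ n w c‖ < ‖γ n w b‖ := by
      intro n
      by_contra hcon
      push Not at hcon
      exact hb n ⟨c, hcon⟩
    choose w hw b hwb using h3
    obtain ⟨y, -, hy⟩ := (isCompact_closedBall (0 : ℂ) 1).ultrafilter_le_nhds
        ((hyperfilter ℕ).map w) (by
          rw [le_principal_iff]
          change ∀ᶠ n in UU, w n ∈ closedBall 0 1
          exact Eventually.of_forall fun n => ball_subset_closedBall (hw n))
    have hy' : Tendsto w UU (𝓝 y) := hy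
    have h4 : ∃ d : Fin m, ∀ᶠ n in UU, b n = d := by
      rw [← Ultrafilter.eventually_exists_iff]
      exact Eventually.of_forall fun n => ⟨_, rfl⟩
    obtain ⟨d, hd⟩ := h4
    have h5 : Tendsto (fun n => aff (γ n) (a y) (w n)) UU (𝓝 (v y y)) := by
      refine (hloc y).tendsto_comp ((hdiff y).continuousOn y (hself y)) (hself y) ?_
      exact tendsto_nhdsWithin_iff.2 ⟨hy', hy'.eventually (ball_mem_nhds y (by norm_num))⟩
    have h6 := tendsto_pi_nhds.1 h5
    have h7 : 2 * ‖v y y c‖ ≤ ‖v y y d‖ := by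
      refine le_of_tendsto_of_tendsto ((h6 c).norm.const_mul 2) (h6 d).norm ?_
      filter_upwards [hd] with n hn
      have := hwb n
      rw [hn] at this
      simp only [aff, Pi.smul_apply, smul_eq_mul, norm_mul]
      nlinarith [norm_nonneg (γ n (w n) (a y))⁻¹]
    -- compare with the constant
    have h8 : ∀ e, ‖v y y e‖ ≤ ‖v y y c‖ := by
      intro e
      have h9 := congrArg norm (hconst y 0 e c)
      simp only [norm_mul] at h9
      have h10 := hc e
      have h11 := norm_pos_iff.2 hc0
      by_contra hcon
      push Not at hcon
      have : ‖v y y c‖ * ‖v 0 0 e‖ ≤ ‖v y y c‖ * ‖v 0 0 c‖ :=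
        mul_le_mul_of_nonneg_left h10 (norm_nonneg _)
      nlinarith
    have h12 := coord_ne_zero (hv0 y y (hself y)) (a := c) (C := 1) (by simpa using h8)
    have := norm_pos_iff.2 h12
    linarith [h8 d]
  · intro z
    refine ⟨fun n => aff (γ n) (a z), v z, ?_, hloc z, hdiff z,
      fun w hw => ⟨hv0 z w hw, hcomp z w hw⟩⟩
    filter_upwards [hne z] with n hn
    refine ⟨aff_diff (h n) hn, fun w hw => ⟨γ n w (a z), hn w hw, ?_⟩⟩
    simp [aff, smul_smul, hn w hw]

/-- Brody reparametrization and extraction of a limit. -/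
lemma brody_limit {m : ℕ} (γ : ℕ → ℂ → (Fin m → ℂ)) (h : ∀ n, HC (γ n))
    (hn : ∀ n, ¬ ∀ z w, Par (γ n z) (γ n w)) :
    ∃ (φ : ℕ → ℂ → ℂ) (δ : ℂ → (Fin m → ℂ)), HC δ ∧ (¬ ∀ z w, Par (δ z) (δ w)) ∧
      Conv (fun n z => γ n (φ n z)) δ := by
  choose z s hb hg using fun n : ℕ => brody_rescale (h n) (hn n) n
  obtain ⟨δ, h1, h2, h3⟩ := limit_exists (fun n ζ => γ n (z n + s n * ζ))
    (fun n => (h n).comp_affine _ _) hb hg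
  exact ⟨fun n ζ => z n + s n * ζ, δ, h1, h2, h3⟩

lemma Conv.seq {m : ℕ} {γ : ℕ → ℂ → (Fin m → ℂ)} {δ : ℂ → (Fin m → ℂ)} (h : Conv γ δ)
    {z₀ : ℂ} {z : ℕ → ℂ} (hz : Tendsto z UU (𝓝 z₀)) :
    ∃ (x : ℕ → (Fin m → ℂ)) (y : Fin m → ℂ), Tendsto x UU (𝓝 y) ∧
      (∀ᶠ n in UU, ∃ c : ℂ, c ≠ 0 ∧ γ n (z n) = c • x n) ∧
      y ≠ 0 ∧ ∃ c : ℂ, c ≠ 0 ∧ δ z₀ = c • y := by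
  obtain ⟨u, v, h1, h2, h3, h4⟩ := h z₀
  have hself : z₀ ∈ ball z₀ (1 / 2) := mem_ball_self (by norm_num)
  have hzb : ∀ᶠ n in UU, z n ∈ ball z₀ (1 / 2) := hz.eventually (ball_mem_nhds z₀ (by norm_num))
  refine ⟨fun n => u n (z n), v z₀, ?_, ?_, h4 z₀ hself⟩
  · refine h2.tendsto_comp (h3.continuousOn z₀ hself) hself ?_
    exact tendsto_nhdsWithin_iff.2 ⟨hz, hzb⟩
  · filter_upwards [h1, hzb] with n hn hn'
    exact hn.2 _ hn'

/-! ### Homogeneous polynomials, identity principle and Hurwitz -/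

lemma eval_smul_hom {m d : ℕ} {P : MvPolynomial (Fin m) ℂ} (hP : P.IsHomogeneous d)
    (c : ℂ) (v : Fin m → ℂ) : eval (c • v) P = c ^ d * eval v P := by
  rw [eval_eq', eval_eq', Finset.mul_sum]
  refine Finset.sum_congr rfl fun e he => ?_
  have h1 : ∑ i, e i = d := by
    have := hP (mem_support_iff.1 he)
    rw [← this, Finsupp.weight_apply, Finsupp.sum_fintype _ _ (by simp)]
    simp
  simp only [Pi.smul_apply, smul_eq_mul, mul_pow, Finset.prod_mul_distrib]
  rw [Finset.prod_pow_eq_pow_sum, h1]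
  ring

lemma eval_smul_zero {m d : ℕ} {P : MvPolynomial (Fin m) ℂ} (hP : P.IsHomogeneous d)
    {c : ℂ} (hc : c ≠ 0) (v : Fin m → ℂ) : eval (c • v) P = 0 ↔ eval v P = 0 := by
  rw [eval_smul_hom hP]
  simp [hc]

lemma eval_continuous {m : ℕ} (P : MvPolynomial (Fin m) ℂ) :
    Continuous (fun v : Fin m → ℂ => eval v P) := MvPolynomial.continuous_eval P

lemma eval_differentiable {m : ℕ} (P : MvPolynomial (Fin m) ℂ) :
    Differentiable ℂ (fun v : Fin m → ℂ => eval v P) := by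
  have h : (fun v : Fin m → ℂ => eval v P) =
      fun v => ∑ d ∈ P.support, P.coeff d * ∏ i, v i ^ d i := by
    funext v
    rw [eval_eq']
  rw [h]
  fun_prop

lemma identity {m d : ℕ} {γ : ℂ → (Fin m → ℂ)} (h : HC γ) {P : MvPolynomial (Fin m) ℂ}
    (hP : P.IsHomogeneous d) {z₀ : ℂ} (h0 : ∀ᶠ z in 𝓝 z₀, eval (γ z) P = 0) :
    ∀ z, eval (γ z) P = 0 := by
  set A : Set ℂ := {z | ∀ᶠ w in 𝓝 z, eval (γ w) P = 0} with hA
  have hopen : IsOpen A := isOpen_setOfPred_eventually_nhds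
  have hclosed : IsClosed A := by
    rw [← closure_subset_iff_isClosed]
    intro z hz
    obtain ⟨W, hW, hzW, F, hFd, hF⟩ := h z
    obtain ⟨r, hr, hrW⟩ := Metric.isOpen_iff.1 hW z hzW
    obtain ⟨y, hyA, hy⟩ := Metric.mem_closure_iff.1 hz r hr
    have hyb : y ∈ ball z r := by rwa [mem_ball, dist_comm]
    have han : AnalyticOnNhd ℂ (fun w => eval (F w) P) (ball z r) := by
      apply DifferentiableOn.analyticOnNhd _ isOpen_ball
      exact (eval_differentiable P).comp_differentiableOn (hFd.mono hrW)
    have hiff : ∀ w ∈ ball z r, eval (γ w) P = 0 ↔ eval (F w) P = 0 := by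
      intro w hw
      obtain ⟨-, c, hc, he⟩ := hF w (hrW hw)
      rw [he, eval_smul_zero hP hc]
    have hzero := han.eqOn_zero_of_preconnected_of_eventuallyEq_zero
      (convex_ball z r).isPreconnected hyb (by
        have h1 : ∀ᶠ w in 𝓝 y, eval (γ w) P = 0 := hyA
        filter_upwards [h1, isOpen_ball.mem_nhds hyb] with w h2 h3
        exact (hiff w h3).1 h2)
    change ∀ᶠ w in 𝓝 z, eval (γ w) P = 0
    filter_upwards [ball_mem_nhds z hr] with w hw
    exact (hiff w hw).2 (hzero hw)
  have huniv : A = Set.univ := IsClopen.eq_univ ⟨hclosed, hopen⟩ ⟨z₀, h0⟩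
  intro z
  have : z ∈ A := by rw [huniv]; trivial
  have h2 : ∀ᶠ w in 𝓝 z, eval (γ w) P = 0 := this
  exact h2.self_of_nhds

lemma hurwitz {h : ℕ → ℂ → ℂ} {g : ℂ → ℂ} {z₀ : ℂ} {r : ℝ} (hr : 0 < r)
    (hd : ∀ᶠ n in UU, DifferentiableOn ℂ (h n) (ball z₀ r))
    (hc : TendstoLocallyUniformlyOn h g UU (ball z₀ r))
    (h0 : g z₀ = 0) (hne : ¬ ∀ᶠ z in 𝓝 z₀, g z = 0) {ρ : ℝ} (hρ : 0 < ρ) :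
    ∀ᶠ n in UU, ∃ z ∈ ball z₀ ρ, h n z = 0 := by
  have hg : DifferentiableOn ℂ g (ball z₀ r) := hc.differentiableOn hd isOpen_ball
  have han : AnalyticAt ℂ g z₀ := hg.analyticAt (ball_mem_nhds z₀ hr)
  have h1 := han.eventually_eq_zero_or_eventually_ne_zero.resolve_left hne
  rw [eventually_nhdsWithin_iff] at h1
  obtain ⟨t₀, ht₀, hb⟩ := Metric.eventually_nhds_iff_ball.1 h1
  set t : ℝ := min t₀ (min r ρ) / 2 with ht
  have htpos : 0 < t := by positivity
  have ht1 : t < t₀ := by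
    have := min_le_left t₀ (min r ρ)
    linarith
  have ht2 : t < r := by
    have := (min_le_right t₀ (min r ρ)).trans (min_le_left _ _)
    linarith
  have ht3 : t < ρ := by
    have := (min_le_right t₀ (min r ρ)).trans (min_le_right _ _)
    linarith
  have hsub : closedBall z₀ t ⊆ ball z₀ r := closedBall_subset_ball ht2
  obtain ⟨x, hx, hmin⟩ := (isCompact_sphere z₀ t).exists_isMinOn
    (NormedSpace.sphere_nonempty.2 htpos.le)
    ((hg.continuousOn.mono (sphere_subset_closedBall.trans hsub)).norm)
  have hxpos : 0 < ‖g x‖ := by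
    refine norm_pos_iff.2 (hb x ?_ ?_)
    · rw [mem_ball, mem_sphere.1 hx]
      exact ht1
    · rintro rfl
      rw [mem_sphere, dist_self] at hx
      linarith
  set M := ‖g x‖ with hM
  have hunif : TendstoUniformlyOn h g UU (closedBall z₀ t) :=
    (tendstoLocallyUniformlyOn_iff_forall_isCompact isOpen_ball).1 hc _ hsub
      (isCompact_closedBall z₀ t)
  have hev := Metric.tendstoUniformlyOn_iff.1 hunif (M / 2) (by positivity)
  filter_upwards [hev, hd] with n hn hdn
  by_contra hcon
  push Not at hcon
  have hnz : ∀ z ∈ closedBall z₀ t, h n z ≠ 0 := fun z hz =>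
    hcon z (closedBall_subset_ball ht3 hz)
  have hdc : DiffContOnCl ℂ (fun z => (h n z)⁻¹) (ball z₀ t) := by
    refine DifferentiableOn.diffContOnCl ?_
    rw [closure_ball z₀ htpos.ne']
    exact (hdn.mono hsub).inv hnz
  have hbound := Complex.norm_le_of_forall_mem_frontier_norm_le (C := (M / 2)⁻¹) isBounded_ball hdc
    (by
      intro z hz
      rw [frontier_ball z₀ htpos.ne'] at hz
      have h2 : M ≤ ‖g z‖ := hmin hz
      have h3 := hn z (sphere_subset_closedBall hz)
      rw [dist_eq_norm] at h3
      have h4 : M / 2 ≤ ‖h n z‖ := by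
        have := norm_sub_norm_le (g z) (h n z)
        linarith
      rw [norm_inv]
      exact inv_anti₀ (by positivity) h4)
    (z := z₀) (subset_closure (mem_ball_self htpos))
  have h5 := hn z₀ (mem_closedBall_self htpos.le)
  rw [h0, dist_eq_norm, zero_sub, norm_neg] at h5
  have h6 : 0 < ‖h n z₀‖ := norm_pos_iff.2 (hnz z₀ (mem_closedBall_self htpos.le))
  rw [norm_inv, inv_le_inv₀ h6 (by positivity)] at hbound
  linarith

lemma locUnif_comp {m : ℕ} {u : ℕ → ℂ → (Fin m → ℂ)} {v : ℂ → (Fin m → ℂ)} {s : Set ℂ}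
    (h : TendstoLocallyUniformlyOn u v UU s) (hv : ContinuousOn v s)
    (P : MvPolynomial (Fin m) ℂ) :
    TendstoLocallyUniformlyOn (fun n z => eval (u n z) P) (fun z => eval (v z) P) UU s := by
  rw [Metric.tendstoLocallyUniformlyOn_iff] at h ⊢
  intro ε hε x hx
  have hP : ContinuousAt (fun w : Fin m → ℂ => eval w P) (v x) := (eval_continuous P).continuousAt
  obtain ⟨η, hη, hPη⟩ := Metric.continuousAt_iff.1 hP (ε / 2) (by positivity)
  obtain ⟨t, ht, hn⟩ := h (η / 2) (by positivity) x hx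
  have hvx : ∀ᶠ y in 𝓝[s] x, dist (v y) (v x) < η / 2 :=
    Metric.tendsto_nhds.1 (hv x hx) (η / 2) (by positivity)
  refine ⟨t ∩ {y | dist (v y) (v x) < η / 2}, inter_mem ht hvx, ?_⟩
  filter_upwards [hn] with n hn y hy
  have h1 := hn y hy.1
  have h2 : dist (v y) (v x) < η / 2 := hy.2
  have h3 := hPη (show dist (v y) (v x) < η by linarith)
  have h4 := hPη (show dist (u n y) (v x) < η by
    rw [dist_comm] at h1
    linarith [dist_triangle (u n y) (v y) (v x)])
  have h5 := dist_triangle_right (eval (v y) P) (eval (u n y) P) (eval (v x) P)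
  linarith

lemma Conv.hurwitz {m d : ℕ} {γ : ℕ → ℂ → (Fin m → ℂ)} {δ : ℂ → (Fin m → ℂ)} (h : Conv γ δ)
    (hδ : HC δ) {P : MvPolynomial (Fin m) ℂ} (hP : P.IsHomogeneous d)
    (hne : ¬ ∀ z, eval (δ z) P = 0) {z₀ : ℂ} (h0 : eval (δ z₀) P = 0) :
    ∃ z : ℕ → ℂ, Tendsto z UU (𝓝 z₀) ∧ ∀ᶠ n in UU, eval (γ n (z n)) P = 0 := by
  obtain ⟨u, v, h1, h2, h3, h4⟩ := h z₀
  have hself : z₀ ∈ ball z₀ (1 / 2) := mem_ball_self (by norm_num)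
  have hiff : ∀ w ∈ ball z₀ (1 / 2), eval (δ w) P = 0 ↔ eval (v w) P = 0 := by
    intro w hw
    obtain ⟨-, c, hc, he⟩ := h4 w hw
    rw [he, eval_smul_zero hP hc]
  have key : ∀ ρ : ℝ, 0 < ρ → ∀ᶠ n in UU, ∃ z ∈ ball z₀ ρ, eval (γ n z) P = 0 := by
    intro ρ hρ
    have h5 := _root_.hurwitz (h := fun n z => eval (u n z) P) (g := fun z => eval (v z) P)
      (z₀ := z₀) (r := 1 / 2) (by norm_num) (by
        filter_upwards [h1] with n hn
        exact (eval_differentiable P).comp_differentiableOn hn.1)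
      (locUnif_comp h2 h3.continuousOn P) ((hiff z₀ hself).1 h0) (by
        intro h6
        apply hne
        refine identity hδ hP (z₀ := z₀) ?_
        filter_upwards [h6, isOpen_ball.mem_nhds hself] with w h7 h8
        exact (hiff w h8).2 h7) (ρ := min ρ (1 / 2)) (by positivity)
    filter_upwards [h5, h1] with n hn hn'
    obtain ⟨z, hz, hz0⟩ := hn
    refine ⟨z, ball_subset_ball (min_le_left _ _) hz, ?_⟩
    obtain ⟨c, hc, he⟩ := hn'.2 z (ball_subset_ball (min_le_right _ _) hz)
    rw [he, eval_smul_zero hP hc]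
    exact hz0
  have hex : ∀ n : ℕ, ∃ z, (∃ w, eval (γ n w) P = 0) → eval (γ n z) P = 0 ∧
      dist z₀ z < infDist z₀ {w | eval (γ n w) P = 0} + 1 / ((n : ℝ) + 1) := by
    intro n
    by_cases hz : ∃ w, eval (γ n w) P = 0
    · have hpos : (0:ℝ) < 1 / ((n : ℝ) + 1) := by positivity
      obtain ⟨z, hz1, hz2⟩ := (infDist_lt_iff (s := {w | eval (γ n w) P = 0}) hz).1
        (lt_add_of_pos_right (infDist z₀ {w | eval (γ n w) P = 0}) hpos)
      exact ⟨z, fun _ => ⟨hz1, hz2⟩⟩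
    · exact ⟨0, fun hh => (hz hh).elim⟩
  choose z hz using hex
  refine ⟨z, ?_, ?_⟩
  · rw [Metric.tendsto_nhds]
    intro ε hε
    have hsmall : ∀ᶠ n : ℕ in UU, 1 / ((n : ℝ) + 1) < ε / 2 :=
      Nat.hyperfilter_le_atTop
        (tendsto_one_div_add_atTop_nhds_zero_nat.eventually_lt_const (by positivity))
    filter_upwards [key (ε / 2) (by positivity), hsmall] with n hn hn'
    obtain ⟨w, hw, hw0⟩ := hn
    have h5 := (hz n ⟨w, hw0⟩).2
    have h6 : infDist z₀ {w | eval (γ n w) P = 0} ≤ dist z₀ w := infDist_le_dist_of_mem hw0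
    rw [mem_ball, dist_comm] at hw
    rw [dist_comm]
    linarith
  · filter_upwards [key 1 one_pos] with n hn
    obtain ⟨w, -, hw0⟩ := hn
    exact (hz n ⟨w, hw0⟩).1

/-! ### Little Picard theorem -/

lemma exists_log {φ : ℂ → ℂ} (hd : Differentiable ℂ φ) (h0 : ∀ z, φ z ≠ 0) :
    ∃ G : ℂ → ℂ, Differentiable ℂ G ∧ ∀ z, φ z = Complex.exp (G z) := by
  have hd' : Differentiable ℂ (deriv φ) := hd.deriv
  have h1 : Differentiable ℂ (fun z => deriv φ z / φ z) := hd'.div hd h0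
  obtain ⟨G, hG0, hG⟩ := h1.isExactOn_univ.with_val_at 0 (Complex.log (φ 0))
  have hGd : Differentiable ℂ G := fun z => (hG z trivial).differentiableAt
  refine ⟨G, hGd, fun z => ?_⟩
  have h2 : ∀ x, HasDerivAt (fun z => φ z * Complex.exp (-G z)) 0 x := by
    intro x
    have h3 := ((hd x).hasDerivAt).mul ((hG x trivial).neg.cexp)
    have h5 : φ x * (deriv φ x / φ x) = deriv φ x := mul_div_cancel₀ _ (h0 x)
    refine h3.congr_deriv ?_
    linear_combination -(Complex.exp (-G x)) * h5
  have h4 : φ z * Complex.exp (-G z) = φ 0 * Complex.exp (-G 0) :=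
    is_const_of_deriv_eq_zero (fun x => (h2 x).differentiableAt) (fun x => (h2 x).deriv) z 0
  rw [hG0, Complex.exp_neg, Complex.exp_neg, Complex.exp_log (h0 0), mul_inv_cancel₀ (h0 0)] at h4
  have := Complex.exp_ne_zero (G z)
  field_simp at h4
  exact h4

lemma dyadic_root {x : ℂ} (hx : ‖x‖ = 1) {ε : ℝ} (hε : 0 < ε) :
    ∃ (k : ℕ) (ω : ℂ), ω ^ (2 ^ k) = 1 ∧ dist ω x < ε := by
  set θ : ℝ := Complex.arg x with hθ
  have hxe : x = Complex.exp (θ * Complex.I) := by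
    have := Complex.norm_mul_exp_arg_mul_I x
    rw [hx] at this
    simpa using this.symm
  have hcont : Continuous (fun t : ℝ => Complex.exp (t * Complex.I)) := by fun_prop
  obtain ⟨η, hη, hb⟩ := Metric.continuousAt_iff.1 (hcont.continuousAt (x := θ)) ε hε
  have hsmall : ∀ᶠ k : ℕ in atTop, (2 * Real.pi) * (1 / 2 : ℝ) ^ k < η := by
    have : Tendsto (fun n : ℕ => (2 * Real.pi) * (1 / 2 : ℝ) ^ n) atTop
        (𝓝 ((2 * Real.pi) * 0)) :=
      (tendsto_pow_atTop_nhds_zero_of_lt_one (by norm_num) (by norm_num)).const_mul _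
    rw [mul_zero] at this
    exact this.eventually_lt_const hη
  obtain ⟨k, hk⟩ := hsmall.exists
  set q : ℝ := θ * 2 ^ k / (2 * Real.pi) with hq
  set t : ℝ := 2 * Real.pi * ⌊q⌋ / 2 ^ k with ht
  have hpi := Real.pi_pos
  refine ⟨k, Complex.exp (t * Complex.I), ?_, ?_⟩
  · rw [← Complex.exp_nat_mul, Complex.exp_eq_one_iff]
    refine ⟨⌊q⌋, ?_⟩
    rw [ht]
    push_cast
    field_simp
  · have h1 : dist t θ < η := by
      have h2 : θ = 2 * Real.pi * q / 2 ^ k := by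
        rw [hq]
        field_simp
      have h3 := Int.floor_le q
      have h4 := Int.lt_floor_add_one q
      rw [dist_comm, Real.dist_eq, abs_of_nonneg]
      · have : θ - t = (2 * Real.pi) * (1 / 2 : ℝ) ^ k * (q - ⌊q⌋) := by
          rw [h2, ht, one_div, inv_pow]
          ring
        rw [this]
        have hp : 0 < (2 * Real.pi) * (1 / 2 : ℝ) ^ k := by positivity
        nlinarith
      · have : θ - t = (2 * Real.pi) * (1 / 2 : ℝ) ^ k * (q - ⌊q⌋) := by
          rw [h2, ht, one_div, inv_pow]
          ring
        rw [this]
        have : 0 ≤ q - ⌊q⌋ := by linarith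
        positivity
    have := hb h1
    rwa [← hxe] at this

lemma const_of_norm_ne_one {ψ : ℂ → ℂ} (hd : Differentiable ℂ ψ) (h : ∀ z, ‖ψ z‖ ≠ 1) :
    ∀ z w, ψ z = ψ w := by
  by_cases h1 : ∃ z, ‖ψ z‖ ≤ 1
  · by_cases h2 : ∃ z, 1 ≤ ‖ψ z‖
    · obtain ⟨a, ha⟩ := h1
      obtain ⟨b, hb⟩ := h2
      obtain ⟨z, hz⟩ := mem_range_of_exists_le_of_exists_ge hd.continuous.norm ⟨a, ha⟩ ⟨b, hb⟩
      exact (h z hz).elim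
    · push Not at h2
      intro z w
      refine hd.apply_eq_apply_of_bounded ?_ z w
      rw [isBounded_iff_forall_norm_le]
      refine ⟨1, ?_⟩
      rintro _ ⟨x, rfl⟩
      exact (h2 x).le
  · push Not at h1
    have h0 : ∀ z, ψ z ≠ 0 := by
      intro z hz
      have := h1 z
      rw [hz, norm_zero] at this
      linarith
    intro z w
    have h3 : Differentiable ℂ (fun z => (ψ z)⁻¹) := hd.inv h0
    have := h3.apply_eq_apply_of_bounded (by
      rw [isBounded_iff_forall_norm_le]
      refine ⟨1, ?_⟩
      rintro _ ⟨x, rfl⟩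
      simp only [norm_inv]
      exact inv_le_one_of_one_le₀ (h1 x).le) z w
    exact inv_injective this

lemma picard {φ : ℂ → ℂ} (hd : Differentiable ℂ φ) (h0 : ∀ z, φ z ≠ 0) (h1 : ∀ z, φ z ≠ 1) :
    ∀ z w, φ z = φ w := by
  by_contra hnc
  obtain ⟨G, hG, hφ⟩ := exists_log hd h0
  have hpow : ∀ (n : ℕ) z, Complex.exp (G z / 2 ^ n) ^ (2 ^ n) = φ z := by
    intro n z
    rw [← Complex.exp_nat_mul, hφ z]
    congr 1
    push_cast
    field_simp
  set γ : ℕ → ℂ → (Fin 2 → ℂ) := fun n z => ![Complex.exp (G z / 2 ^ n), 1] with hγ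
  have hHC : ∀ n, HC (γ n) := by
    intro n z₀
    refine ⟨Set.univ, isOpen_univ, trivial, γ n, ?_, fun z _ => ⟨?_, 1, one_ne_zero, by simp⟩⟩
    · rw [differentiableOn_univ, differentiable_pi]
      intro i
      fin_cases i
      · simp only [hγ]
        exact (hG.div_const _).cexp
      · simp [hγ]
    · intro h
      have := congrFun h 1
      simp [hγ] at this
  have hnon : ∀ n, ¬ ∀ z w, Par (γ n z) (γ n w) := by
    intro n h
    apply hnc
    intro z w
    have h2 := h z w 0 1
    simp only [hγ, Matrix.cons_val_zero, Matrix.cons_val_one, mul_one, one_mul] at h2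
    rw [← hpow n z, ← hpow n w, h2]
  obtain ⟨f, δ, hδ, hδn, hconv⟩ := brody_limit γ hHC hnon
  have claim : ∀ α β : ℂ, (α ≠ 0 ∨ β ≠ 0) →
      (∀ᶠ n in UU, ∀ z, α * Complex.exp (G z / 2 ^ n) + β ≠ 0) →
      ∀ z, α * δ z 0 + β * δ z 1 ≠ 0 := by
    intro α β hab hev z hz
    have hP : (C α * X 0 + C β * X 1 : MvPolynomial (Fin 2) ℂ).IsHomogeneous 1 := by
      refine IsHomogeneous.add ?_ ?_
      · simpa using (isHomogeneous_C (Fin 2) α).mul (isHomogeneous_X ℂ (0 : Fin 2))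
      · simpa using (isHomogeneous_C (Fin 2) β).mul (isHomogeneous_X ℂ (1 : Fin 2))
    by_cases hne : ∀ z, eval (δ z) (C α * X 0 + C β * X 1 : MvPolynomial (Fin 2) ℂ) = 0
    · apply hδn
      intro x y
      have hx := hne x
      have hy := hne y
      simp only [map_add, map_mul, eval_C, eval_X] at hx hy
      have key : δ x 0 * δ y 1 = δ x 1 * δ y 0 := by
        rcases hab with ha | hb
        · apply mul_left_cancel₀ ha
          linear_combination (δ y 1) * hx - (δ x 1) * hy
        · apply mul_left_cancel₀ hb
          linear_combination (δ x 0) * hy - (δ y 0) * hx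
      intro a b
      fin_cases a <;> fin_cases b
      · rfl
      · exact key
      · exact key.symm
      · rfl
    · obtain ⟨s, -, hs⟩ := hconv.hurwitz hδ hP hne (z₀ := z) (by simpa using hz)
      obtain ⟨n, hn, hn'⟩ := (hs.and hev).exists
      apply hn' (f n (s n))
      simpa [hγ] using hn
  have hδ1 : ∀ z, δ z 1 ≠ 0 := by
    intro z
    have := claim 0 1 (Or.inr one_ne_zero) (Eventually.of_forall fun n z => by simp) z
    simpa using this
  have hroot : ∀ (k : ℕ) (ω : ℂ), ω ^ (2 ^ k) = 1 → ∀ z, δ z 0 - ω * δ z 1 ≠ 0 := by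
    intro k ω hω z
    have := claim 1 (-ω) (Or.inl one_ne_zero) (by
      have hk : ∀ᶠ n : ℕ in UU, k ≤ n := Nat.hyperfilter_le_atTop (eventually_ge_atTop k)
      filter_upwards [hk] with n hn x hx
      apply h1 x
      have h2 : Complex.exp (G x / 2 ^ n) = ω := by linear_combination hx
      rw [← hpow n x, h2, ← Nat.sub_add_cancel hn, pow_add, mul_comm, pow_mul, hω, one_pow]) z
    intro h
    apply this
    linear_combination h
  have hψd : Differentiable ℂ (fun z => aff δ 1 z 0) := by
    have h2 : Differentiable ℂ (aff δ 1) := differentiableOn_univ.1 (aff_diff hδ fun z _ => hδ1 z)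
    exact fun z => (differentiableAt_pi.1 (h2 z)) 0
  have hψn : ¬ ∀ z w, aff δ 1 z 0 = aff δ 1 w 0 := by
    intro h
    apply hδn
    intro z w
    refine aff_par (hδ1 z) (hδ1 w) ?_
    funext b
    fin_cases b
    · exact h z w
    · exact (aff_self (hδ1 z)).trans (aff_self (hδ1 w)).symm
  apply hψn
  refine const_of_norm_ne_one hψd ?_
  intro z hz
  have hopen : IsOpenMap (fun z => aff δ 1 z 0) := by
    refine (AnalyticOnNhd.is_constant_or_isOpenMap ?_).resolve_left ?_
    · exact hψd.differentiableOn.analyticOnNhd isOpen_univ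
    · rintro ⟨w, hw⟩
      exact hψn fun x y => (hw x).trans (hw y).symm
  obtain ⟨ε, hε, hball⟩ := Metric.isOpen_iff.1 hopen.isOpen_range _ (Set.mem_range_self z)
  obtain ⟨k, ω, hω, hdist⟩ := dyadic_root hz hε
  obtain ⟨y, hy⟩ := hball (mem_ball.2 hdist)
  apply hroot k ω hω y
  simp only [aff, Pi.smul_apply, smul_eq_mul] at hy
  have := hδ1 y
  rw [← hy]
  field_simp
  ring

/-! ### Linear forms and curves in lines -/

lemma exists_linear {m : ℕ} {P : MvPolynomial (Fin m) ℂ} (hP : P.IsHomogeneous 1) :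
    ∃ l : (Fin m → ℂ) →ₗ[ℂ] ℂ, ∀ v, eval v P = l v := by
  have h : P ∈ Submodule.span ℂ (Set.range (X : Fin m → MvPolynomial (Fin m) ℂ)) := by
    rw [← homogeneousSubmodule_one_eq_span_X]
    exact hP
  clear hP
  induction h using Submodule.span_induction with
  | mem x hx =>
    obtain ⟨i, rfl⟩ := hx
    exact ⟨LinearMap.proj i, fun v => by simp⟩
  | zero => exact ⟨0, fun v => by simp⟩
  | add x y _ _ hx hy =>
    obtain ⟨l, hl⟩ := hx
    obtain ⟨l', hl'⟩ := hy
    exact ⟨l + l', fun v => by simp [hl, hl']⟩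
  | smul c x _ hx =>
    obtain ⟨l, hl⟩ := hx
    exact ⟨c • l, fun v => by simp [hl, smul_eval]⟩

lemma par_of_lin {m : ℕ} {v w : Fin m → ℂ} {c d : ℂ} (hc : c ≠ 0) (h : c • v = d • w) :
    Par v w := by
  intro a b
  have ha := congrFun h a
  have hb := congrFun h b
  simp only [Pi.smul_apply, smul_eq_mul] at ha hb
  apply mul_left_cancel₀ hc
  linear_combination (w b) * ha - (w a) * hb

lemma par_of_forms {v w : Fin 4 → ℂ} (l : Fin 4 → (Fin 4 → ℂ) →ₗ[ℂ] ℂ)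
    (hl : ∀ v, (∀ i, l i v = 0) → v = 0)
    (h0 : l 0 v = 0) (h0' : l 0 w = 0) (h1 : l 1 v = 0) (h1' : l 1 w = 0)
    (hw : l 3 w ≠ 0) (h : l 2 v * l 3 w = l 2 w * l 3 v) : Par v w := by
  refine par_of_lin (c := l 3 w) (d := l 3 v) hw ?_
  rw [← sub_eq_zero]
  apply hl
  intro i
  fin_cases i
  · simp [h0, h0']
  · simp [h1, h1']
  · simp only [Fin.reduceFinMk, map_sub, map_smul, smul_eq_mul]
    linear_combination h
  · simp only [Fin.reduceFinMk, map_sub, map_smul, smul_eq_mul]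
    ring

lemma picard_line {γ : ℂ → (Fin 4 → ℂ)} (h : HC γ) (i j a b c : (Fin 4 → ℂ) →ₗ[ℂ] ℂ)
    (hab : ∀ v, i v = 0 → j v = 0 → a v = 0 → b v = 0 → v = 0)
    (hac : ∀ v, i v = 0 → j v = 0 → a v = 0 → c v = 0 → v = 0)
    (hbc : ∀ v, i v = 0 → j v = 0 → b v = 0 → c v = 0 → v = 0)
    (hi : ∀ z, i (γ z) = 0) (hj : ∀ z, j (γ z) = 0)
    (ha : ∀ z, a (γ z) ≠ 0) (hb : ∀ z, b (γ z) ≠ 0) (hc : ∀ z, c (γ z) ≠ 0) :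
    ∀ z w, Par (γ z) (γ w) := by
  have hl : ∀ v, (∀ k, (![i, j, a, b] k : (Fin 4 → ℂ) →ₗ[ℂ] ℂ) v = 0) → v = 0 := fun v hv =>
    hab v (hv 0) (hv 1) (hv 2) (hv 3)
  let T : (Fin 4 → ℂ) →ₗ[ℂ] (Fin 4 → ℂ) := LinearMap.pi ![i, j, a, b]
  have hinj : Function.Injective T := by
    rw [← LinearMap.ker_eq_bot, LinearMap.ker_eq_bot']
    intro v hv
    exact hl v fun k => congrFun hv k
  have hsurj : Function.Surjective T := LinearMap.injective_iff_surjective.1 hinj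
  obtain ⟨e, he⟩ := hsurj ![0, 0, 1, 0]
  obtain ⟨e', he'⟩ := hsurj ![0, 0, 0, 1]
  have e0 : i e = 0 := congrFun he 0
  have e1 : j e = 0 := congrFun he 1
  have e2 : a e = 1 := congrFun he 2
  have e3 : b e = 0 := congrFun he 3
  have e0' : i e' = 0 := congrFun he' 0
  have e1' : j e' = 0 := congrFun he' 1
  have e2' : a e' = 0 := congrFun he' 2
  have e3' : b e' = 1 := congrFun he' 3
  have hα : c e ≠ 0 := by
    intro h0
    have := hbc e e0 e1 e3 h0
    rw [this] at e2
    simp at e2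
  have hβ : c e' ≠ 0 := by
    intro h0
    have := hac e' e0' e1' e2' h0
    rw [this] at e3'
    simp at e3'
  have hrel : ∀ v, i v = 0 → j v = 0 → c v = a v * c e + b v * c e' := by
    intro v h0 h1
    have : v - (a v • e + b v • e') = 0 := by
      apply hab
      · simp [h0, e0, e0']
      · simp [h1, e1, e1']
      · simp [e2, e2']
      · simp [e3, e3']
    have h2 := congrArg c (sub_eq_zero.1 this)
    simpa using h2
  set φ : ℂ → ℂ := fun z => -(c e * a (γ z)) / (c e' * b (γ z)) with hφ
  have hlin : ∀ l : (Fin 4 → ℂ) →ₗ[ℂ] ℂ, Differentiable ℂ l := fun l =>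
    (LinearMap.toContinuousLinearMap l).differentiable
  have hφd : Differentiable ℂ φ := by
    intro z
    obtain ⟨W, hW, hzW, F, hFd, hF⟩ := h z
    have hFz : DifferentiableAt ℂ F z := (hFd z hzW).differentiableAt (hW.mem_nhds hzW)
    have hFb : b (F z) ≠ 0 := by
      obtain ⟨-, d, -, hdF⟩ := hF z hzW
      have := hb z
      rw [hdF, map_smul] at this
      exact right_ne_zero_of_mul this
    have hdd : DifferentiableAt ℂ (fun z => -(c e * a (F z)) / (c e' * b (F z))) z := by
      have hA : DifferentiableAt ℂ (fun z => a (F z)) z := (hlin a _).comp z hFz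
      have hB : DifferentiableAt ℂ (fun z => b (F z)) z := (hlin b _).comp z hFz
      exact ((hA.const_mul _).neg).div (hB.const_mul _) (mul_ne_zero hβ hFb)
    refine hdd.congr_of_eventuallyEq ?_
    filter_upwards [hW.mem_nhds hzW] with w hw
    obtain ⟨-, d, hd0, hdF⟩ := hF w hw
    have hbw := hb w
    rw [hdF, map_smul] at hbw
    have hbw' : b (F w) ≠ 0 := right_ne_zero_of_mul hbw
    simp only [hφ, hdF, map_smul, smul_eq_mul]
    field_simp
  have hconst := picard hφd (by
    intro z h0
    simp only [hφ, div_eq_zero_iff, neg_eq_zero, mul_eq_zero] at h0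
    have := ha z
    have := hb z
    tauto) (by
    intro z h1
    have h2 := hrel (γ z) (hi z) (hj z)
    apply hc z
    have h3 := hb z
    simp only [hφ] at h1
    rw [div_eq_one_iff_eq (mul_ne_zero hβ h3)] at h1
    rw [h2]
    linear_combination -h1)
  intro z w
  refine par_of_forms ![i, j, a, b] hl (hi z) (hi w) (hj z) (hj w) (hb w) ?_
  have h1 := hconst z w
  have h2 := hb z
  have h3 := hb w
  simp only [hφ] at h1
  rw [div_eq_div_iff (mul_ne_zero hβ h2) (mul_ne_zero hβ h3)] at h1
  change a (γ z) * b (γ w) = a (γ w) * b (γ z)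
  apply mul_left_cancel₀ (mul_ne_zero hα hβ)
  linear_combination -h1

/-! ### Translation between projective maps and vector representatives -/

lemma HoloToProj.hc {m : ℕ} {f : ℂ → Projectivization ℂ (Fin m → ℂ)} (hf : HoloToProj f) :
    HC (fun z => (f z).rep) := by
  intro z₀
  obtain ⟨W, hW, hz, F, hFd, hF⟩ := hf z₀
  refine ⟨W, hW, hz, F, hFd, fun z hzW => ?_⟩
  obtain ⟨h0, he⟩ := hF z hzW
  refine ⟨h0, ?_⟩
  obtain ⟨a, ha⟩ := Projectivization.exists_smul_eq_mk_rep ℂ (F z) h0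
  refine ⟨a, a.ne_zero, ?_⟩
  change (f z).rep = _
  rw [he, ← ha]
  rfl

lemma mk_eq_of_par {m : ℕ} {v w : Fin m → ℂ} (hv : v ≠ 0) (hw : w ≠ 0) (h : Par v w) :
    Projectivization.mk ℂ v hv = Projectivization.mk ℂ w hw := by
  rw [Projectivization.mk_eq_mk_iff']
  obtain ⟨a, ha, -⟩ := exists_argmax hw
  refine ⟨v a / w a, ?_⟩
  funext b
  simp only [Pi.smul_apply, smul_eq_mul]
  field_simp
  linear_combination h a b

lemma par_of_mk_eq {m : ℕ} {v w : Fin m → ℂ} (hv : v ≠ 0) (hw : w ≠ 0)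
    (h : Projectivization.mk ℂ v hv = Projectivization.mk ℂ w hw) : Par v w := by
  rw [Projectivization.mk_eq_mk_iff'] at h
  obtain ⟨a, rfl⟩ := h
  intro b c
  simp only [Pi.smul_apply, smul_eq_mul]
  ring

lemma HC.holo {m : ℕ} {δ : ℂ → (Fin m → ℂ)} (h : HC δ) :
    HoloToProj (fun z => Projectivization.mk ℂ (δ z) (h.ne_zero z)) := by
  intro z₀
  obtain ⟨W, hW, hz, F, hFd, hF⟩ := h z₀
  refine ⟨W, hW, hz, F, hFd, fun z hzW => ?_⟩
  obtain ⟨h0, c, hc, he⟩ := hF z hzW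
  refine ⟨h0, ?_⟩
  rw [Projectivization.mk_eq_mk_iff']
  exact ⟨c, he.symm⟩

lemma rep_mk {m : ℕ} {v : Fin m → ℂ} (hv : v ≠ 0) :
    ∃ c : ℂ, c ≠ 0 ∧ (Projectivization.mk ℂ v hv).rep = c • v := by
  obtain ⟨a, ha⟩ := Projectivization.exists_smul_eq_mk_rep ℂ v hv
  exact ⟨a, a.ne_zero, ha.symm⟩

lemma Conv.lim_zero {m d : ℕ} {γ : ℕ → ℂ → (Fin m → ℂ)} {δ : ℂ → (Fin m → ℂ)} (h : Conv γ δ)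
    {P : MvPolynomial (Fin m) ℂ} (hP : P.IsHomogeneous d) {z₀ : ℂ} {z : ℕ → ℂ}
    (hz : Tendsto z UU (𝓝 z₀)) (h0 : ∀ᶠ n in UU, eval (γ n (z n)) P = 0) :
    eval (δ z₀) P = 0 := by
  obtain ⟨x, y, hxy, hx, -, c, hc, he⟩ := h.seq hz
  rw [he, eval_smul_zero hP hc]
  refine tendsto_nhds_unique ((eval_continuous P).tendsto y |>.comp hxy)
    (tendsto_const_nhds.congr' ?_)
  filter_upwards [hx, h0] with n hn hn'
  obtain ⟨c', hc', he'⟩ := hn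
  rw [he', eval_smul_zero hP hc'] at hn'
  exact hn'.symm

lemma Conv.lim_eps {m d : ℕ} {γ : ℕ → ℂ → (Fin m → ℂ)} {δ : ℂ → (Fin m → ℂ)} (h : Conv γ δ)
    {P Q : MvPolynomial (Fin m) ℂ} (hP : P.IsHomogeneous d) (hQ : Q.IsHomogeneous d)
    {z₀ : ℂ} {z : ℕ → ℂ} {ε : ℕ → ℂ} (hε : Tendsto ε UU (𝓝 0))
    (hz : Tendsto z UU (𝓝 z₀))
    (h0 : ∀ᶠ n in UU, eval (γ n (z n)) P = ε n * eval (γ n (z n)) Q) :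
    eval (δ z₀) P = 0 := by
  obtain ⟨x, y, hxy, hx, -, c, hc, he⟩ := h.seq hz
  rw [he, eval_smul_zero hP hc]
  have h1 : Tendsto (fun n => ε n * eval (x n) Q) UU (𝓝 (0 * eval y Q)) :=
    hε.mul ((eval_continuous Q).tendsto y |>.comp hxy)
  rw [zero_mul] at h1
  refine tendsto_nhds_unique ((eval_continuous P).tendsto y |>.comp hxy) (h1.congr' ?_)
  filter_upwards [hx, h0] with n hn hn'
  obtain ⟨c', hc', he'⟩ := hn
  rw [he', eval_smul_hom hP, eval_smul_hom hQ] at hn'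
  apply mul_left_cancel₀ (pow_ne_zero d hc')
  simp only [Function.comp_apply]
  linear_combination -hn'

lemma perm_cases (σ : Equiv.Perm (Fin 6)) (l : Fin 6) :
    l = σ 0 ∨ l = σ 1 ∨ l = σ 2 ∨ l = σ 3 ∨ l = σ 4 ∨ l = σ 5 := by
  obtain ⟨k, rfl⟩ := σ.surjective l
  fin_cases k <;> simp

/-- There are three further indices outside of a three-element set. -/
lemma three_others (i j s : Fin 6) : ∃ a b c : Fin 6, a ≠ b ∧ a ≠ c ∧ b ≠ c ∧
    (a ≠ i ∧ a ≠ j ∧ a ≠ s) ∧ (b ≠ i ∧ b ≠ j ∧ b ≠ s) ∧ (c ≠ i ∧ c ≠ j ∧ c ≠ s) := by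
  have hcard : 2 < (Finset.univ \ {i, j, s} : Finset (Fin 6)).card := by
    have h1 := Finset.le_card_sdiff ({i, j, s} : Finset (Fin 6)) Finset.univ
    have h2 : ({i, j, s} : Finset (Fin 6)).card ≤ 3 := Finset.card_le_three
    rw [Finset.card_univ, Fintype.card_fin] at h1
    omega
  obtain ⟨a, ha, b, hb, c, hc, hab, hac, hbc⟩ := Finset.two_lt_card.1 hcard
  simp only [Finset.mem_sdiff, Finset.mem_univ, true_and, Finset.mem_insert,
    Finset.mem_singleton, not_or] at ha hb hc
  exact ⟨a, b, c, hab, hac, hbc, ha, hb, hc⟩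

/-- **Lemma (inductive step).**  Let `Δ` be a collection of `k` double lines,
`D = P (σ 0) ∩ P (σ 1)` an extra one.  Assume the sextic `(sk = 0)` is such that all the
complements `P i \ (⋃_{j ≠ i} P j \ (Δ ∩ S_k))` are hyperbolic.  Then for all
sufficiently small `ε ≠ 0`, with `S_{k+1} = (p (σ 2) p (σ 3) p (σ 4)² p (σ 5)² = ε sk)`,
all the complements `P i \ (⋃_{j ≠ i} P j \ ((Δ ∪ D) ∩ S_{k+1}))` are hyperbolic. -/
theorem deformation_lemma
    (p : Fin 6 → MvPolynomial (Fin 4) ℂ)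
    (hp_lin : ∀ i, (p i).IsHomogeneous 1)
    (hp0 : ∀ i, p i ≠ 0)
    (hp_distinct : ∀ i j, i ≠ j → ¬ ∃ c : ℂ, p i = c • p j)
    -- general position: no quadruple point
    (hgen : ∀ i j k l : Fin 6, i ≠ j → i ≠ k → i ≠ l → j ≠ k → j ≠ l → k ≠ l →
      ∀ v : Fin 4 → ℂ, v ≠ 0 →
        ¬ (eval v (p i) = 0 ∧ eval v (p j) = 0 ∧ eval v (p k) = 0 ∧ eval v (p l) = 0))
    -- the collection `Δ` of `k` double lines and the extra double line `D`
    (k : ℕ) (Δ : Finset (Sym2 (Fin 6)))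
    (hΔ_card : Δ.card = k)
    (hΔ_lines : ∀ e ∈ Δ, ¬ e.IsDiag)
    (σ : Equiv.Perm (Fin 6))
    (hD_new : s(σ 0, σ 1) ∉ Δ)
    -- the sextic `S_k = (sk = 0)`, in general position with respect to the planes
    (sk : MvPolynomial (Fin 4) ℂ)
    (hsk_hom : sk.IsHomogeneous 6) (hsk0 : sk ≠ 0)
    (hsk_gen : ∀ v : Fin 4 → ℂ, v ≠ 0 →
      (∃ i j l : Fin 6, i ≠ j ∧ i ≠ l ∧ j ≠ l ∧
        eval v (p i) = 0 ∧ eval v (p j) = 0 ∧ eval v (p l) = 0) →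
      eval v sk ≠ 0)
    -- hypothesis: the complements `P i \ (⋃_{j ≠ i} P j \ (Δ ∩ S_k))` are hyperbolic
    (hhyp : ∀ i : Fin 6, ∀ f : ℂ → Projectivization ℂ (Fin 4 → ℂ), HoloToProj f →
      (∀ z : ℂ, eval (f z).rep (p i) = 0) →
      (∀ (z : ℂ) (j : Fin 6), j ≠ i → eval (f z).rep (p j) = 0 →
        (∃ e ∈ Δ, ∀ a ∈ e, eval (f z).rep (p a) = 0) ∧ eval (f z).rep sk = 0) →
      ∀ z w : ℂ, f z = f w) :
    -- conclusion: for small `ε ≠ 0`, the complements with `Δ ∪ {D}` and `S_{k+1}` are hyperbolic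
    ∃ ε₀ : ℝ, 0 < ε₀ ∧ ∀ ε : ℂ, ε ≠ 0 → ‖ε‖ < ε₀ →
      ∀ i : Fin 6, ∀ f : ℂ → Projectivization ℂ (Fin 4 → ℂ), HoloToProj f →
        (∀ z : ℂ, eval (f z).rep (p i) = 0) →
        (∀ (z : ℂ) (j : Fin 6), j ≠ i → eval (f z).rep (p j) = 0 →
          (∃ e ∈ insert s(σ 0, σ 1) Δ, ∀ a ∈ e, eval (f z).rep (p a) = 0) ∧
          eval (f z).rep (p (σ 2) * p (σ 3) * p (σ 4) ^ 2 * p (σ 5) ^ 2) =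
            ε * eval (f z).rep sk) →
        ∀ z w : ℂ, f z = f w := by
  set Q : MvPolynomial (Fin 4) ℂ := p (σ 2) * p (σ 3) * p (σ 4) ^ 2 * p (σ 5) ^ 2 with hQ
  have hQhom : Q.IsHomogeneous 6 :=
    (((hp_lin (σ 2)).mul (hp_lin (σ 3))).mul ((hp_lin (σ 4)).pow 2)).mul ((hp_lin (σ 5)).pow 2)
  -- the sextic `Q` and the four planes
  have hQ1 : ∀ (v : Fin 4 → ℂ) (l : Fin 6), l ≠ σ 0 → l ≠ σ 1 → eval v (p l) = 0 →
      eval v Q = 0 := by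
    intro v l h0 h1 hl
    rcases perm_cases σ l with h | h | h | h | h | h
    · exact (h0 h).elim
    · exact (h1 h).elim
    all_goals
      rw [h] at hl
      simp [hQ, hl]
  have hQ2 : ∀ v : Fin 4 → ℂ, eval v Q = 0 →
      ∃ l : Fin 6, l ≠ σ 0 ∧ l ≠ σ 1 ∧ eval v (p l) = 0 := by
    intro v hv
    simp only [hQ, map_mul, map_pow, mul_eq_zero, pow_eq_zero_iff, ne_eq,
      OfNat.ofNat_ne_zero, not_false_eq_true] at hv
    rcases hv with ((hv | hv) | hv) | hv
    · exact ⟨σ 2, by simp, by simp, hv⟩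
    · exact ⟨σ 3, by simp, by simp, hv⟩
    · exact ⟨σ 4, by simp, by simp, hv⟩
    · exact ⟨σ 5, by simp, by simp, hv⟩
  have hσ01 : σ 0 ≠ σ 1 := by simp
  -- pointwise dichotomy
  have hdich : ∀ (v : Fin 4 → ℂ) (ε : ℂ), v ≠ 0 → ε ≠ 0 →
      (∃ e ∈ insert s(σ 0, σ 1) Δ, ∀ a ∈ e, eval v (p a) = 0) →
      eval v Q = ε * eval v sk →
      ((∃ e ∈ Δ, ∀ a ∈ e, eval v (p a) = 0) ∧ eval v sk = 0) ∨
      (eval v (p (σ 0)) = 0 ∧ eval v (p (σ 1)) = 0 ∧ eval v Q = ε * eval v sk ∧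
        ∀ l, l ≠ σ 0 → l ≠ σ 1 → eval v (p l) ≠ 0) := by
    rintro v ε hv hε ⟨e, he, hev⟩ heq
    rcases Finset.mem_insert.1 he with rfl | heΔ
    · right
      have h0 : eval v (p (σ 0)) = 0 := hev _ (Sym2.mem_mk_left _ _)
      have h1 : eval v (p (σ 1)) = 0 := hev _ (Sym2.mem_mk_right _ _)
      refine ⟨h0, h1, heq, fun l hl0 hl1 hl => ?_⟩
      rw [hQ1 v l hl0 hl1 hl] at heq
      refine hsk_gen v hv ⟨σ 0, σ 1, l, hσ01, hl0.symm, hl1.symm, h0, h1, hl⟩ ?_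
      exact (mul_eq_zero.1 heq.symm).resolve_left hε
    · left
      refine ⟨⟨e, heΔ, hev⟩, ?_⟩
      have hl : ∃ l ∈ e, l ≠ σ 0 ∧ l ≠ σ 1 := by
        by_contra hcon
        push Not at hcon
        induction e using Sym2.ind with
        | _ x y =>
          have hxy : x ≠ y := fun h => hΔ_lines _ heΔ (Sym2.mk_isDiag_iff.2 h)
          have hx := hcon x (Sym2.mem_mk_left _ _)
          have hy := hcon y (Sym2.mem_mk_right _ _)
          by_cases hx0 : x = σ 0
          · have hy1 : y = σ 1 := hy fun h => hxy (hx0.trans h.symm)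
            rw [hx0, hy1] at heΔ
            exact hD_new heΔ
          · have hx1 := hx hx0
            have hy0 : y = σ 0 := by
              by_contra h
              exact hxy (hx1.trans (hy h).symm)
            rw [hx1, hy0, Sym2.eq_swap] at heΔ
            exact hD_new heΔ
      obtain ⟨l, hle, hl0, hl1⟩ := hl
      rw [hQ1 v l hl0 hl1 (hev l hle)] at heq
      exact (mul_eq_zero.1 heq.symm).resolve_left hε
  have main : ∀ i : Fin 6, ∃ ε₀ : ℝ, 0 < ε₀ ∧ ∀ ε : ℂ, ε ≠ 0 → ‖ε‖ < ε₀ →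
      ∀ f : ℂ → Projectivization ℂ (Fin 4 → ℂ), HoloToProj f →
        (∀ z : ℂ, eval (f z).rep (p i) = 0) →
        (∀ (z : ℂ) (j : Fin 6), j ≠ i → eval (f z).rep (p j) = 0 →
          (∃ e ∈ insert s(σ 0, σ 1) Δ, ∀ a ∈ e, eval (f z).rep (p a) = 0) ∧
          eval (f z).rep Q = ε * eval (f z).rep sk) →
        ∀ z w : ℂ, f z = f w := by
    intro i
    by_contra hcon
    have hseq : ∀ n : ℕ, ∃ (ε : ℂ) (f : ℂ → Projectivization ℂ (Fin 4 → ℂ)), ε ≠ 0 ∧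
        ‖ε‖ < 1 / ((n : ℝ) + 1) ∧ HoloToProj f ∧
        (∀ z : ℂ, eval (f z).rep (p i) = 0) ∧
        (∀ (z : ℂ) (j : Fin 6), j ≠ i → eval (f z).rep (p j) = 0 →
          (∃ e ∈ insert s(σ 0, σ 1) Δ, ∀ a ∈ e, eval (f z).rep (p a) = 0) ∧
          eval (f z).rep Q = ε * eval (f z).rep sk) ∧
        ¬ ∀ z w : ℂ, f z = f w := by
      intro n
      by_contra h
      refine hcon ⟨1 / ((n : ℝ) + 1), by positivity, fun ε h0 h1 f h2 h3 h4 => ?_⟩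
      by_contra h5
      exact h ⟨ε, f, h0, h1, h2, h3, h4, h5⟩
    choose ε f hε0 hεn hf hfi hfj hfn using hseq
    have hεlim : Tendsto ε UU (𝓝 0) := by
      have h1 : Tendsto ε atTop (𝓝 0) :=
        squeeze_zero_norm (fun n => (hεn n).le) tendsto_one_div_add_atTop_nhds_zero_nat
      exact h1.mono_left Nat.hyperfilter_le_atTop
    obtain ⟨φ, δ, hδ, hδn, hconv⟩ := brody_limit (fun n z => (f n z).rep) (fun n => (hf n).hc) (by
      intro n h
      apply hfn n
      intro z w
      rw [← (f n z).mk_rep, ← (f n w).mk_rep]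
      exact mk_eq_of_par _ _ (h z w))
    choose ℓ hℓ using fun i => exists_linear (hp_lin i)
    have hquad : ∀ i j k l : Fin 6, i ≠ j → i ≠ k → i ≠ l → j ≠ k → j ≠ l → k ≠ l →
        ∀ v : Fin 4 → ℂ, ℓ i v = 0 → ℓ j v = 0 → ℓ k v = 0 → ℓ l v = 0 → v = 0 := by
      intro i j k l h1 h2 h3 h4 h5 h6 v h7 h8 h9 h10
      by_contra hv
      refine hgen i j k l h1 h2 h3 h4 h5 h6 v hv ?_
      simp only [hℓ]
      exact ⟨h7, h8, h9, h10⟩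
    have hδi : ∀ z, eval (δ z) (p i) = 0 := fun z =>
      hconv.lim_zero (hp_lin i) (tendsto_const_nhds (x := z))
        (Eventually.of_forall fun n => hfi n _)
    -- limits of intersection points
    have hlim : ∀ (z₀ : ℂ) (j : Fin 6), j ≠ i → (¬ ∀ z, eval (δ z) (p j) = 0) →
        eval (δ z₀) (p j) = 0 →
        ((∃ e ∈ Δ, ∀ a ∈ e, eval (δ z₀) (p a) = 0) ∧ eval (δ z₀) sk = 0) ∨
        (eval (δ z₀) (p (σ 0)) = 0 ∧ eval (δ z₀) (p (σ 1)) = 0 ∧ eval (δ z₀) Q = 0 ∧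
          (i = σ 0 ∨ i = σ 1) ∧ (j = σ 0 ∨ j = σ 1)) := by
      intro z₀ j hji hne h0
      obtain ⟨z, hz, hz0⟩ := hconv.hurwitz hδ (hp_lin j) hne h0
      have hd : ∀ᶠ n in UU,
          ((∃ e ∈ Δ, ∀ a ∈ e, eval (f n (φ n (z n))).rep (p a) = 0) ∧
            eval (f n (φ n (z n))).rep sk = 0) ∨
          (eval (f n (φ n (z n))).rep (p (σ 0)) = 0 ∧ eval (f n (φ n (z n))).rep (p (σ 1)) = 0 ∧
            eval (f n (φ n (z n))).rep Q = ε n * eval (f n (φ n (z n))).rep sk ∧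
            ∀ l, l ≠ σ 0 → l ≠ σ 1 → eval (f n (φ n (z n))).rep (p l) ≠ 0) := by
        filter_upwards [hz0] with n hn
        obtain ⟨h1, h2⟩ := hfj n _ j hji hn
        exact hdich _ (ε n) (f n (φ n (z n))).rep_nonzero (hε0 n) h1 h2
      rw [Ultrafilter.eventually_or] at hd
      rcases hd with hA | hB
      · left
        have hA1 : ∀ᶠ n in UU, ∃ e ∈ (Δ : Set (Sym2 (Fin 6))),
            ∀ a ∈ e, eval (f n (φ n (z n))).rep (p a) = 0 := by
          filter_upwards [hA] with n hn using hn.1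
        rw [Ultrafilter.eventually_exists_mem_iff Δ.finite_toSet] at hA1
        obtain ⟨e, he, hev⟩ := hA1
        refine ⟨⟨e, he, fun a ha => ?_⟩, ?_⟩
        · refine hconv.lim_zero (hp_lin a) hz ?_
          filter_upwards [hev] with n hn using hn a ha
        · refine hconv.lim_zero hsk_hom hz ?_
          filter_upwards [hA] with n hn using hn.2
      · right
        refine ⟨?_, ?_, ?_, ?_, ?_⟩
        · refine hconv.lim_zero (hp_lin _) hz ?_
          filter_upwards [hB] with n hn using hn.1
        · refine hconv.lim_zero (hp_lin _) hz ?_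
          filter_upwards [hB] with n hn using hn.2.1
        · refine hconv.lim_eps hQhom hsk_hom hεlim hz ?_
          filter_upwards [hB] with n hn using hn.2.2.1
        · obtain ⟨n, hn⟩ := hB.exists
          by_contra hi
          push Not at hi
          exact hn.2.2.2 i hi.1 hi.2 (hfi n _)
        · obtain ⟨n, hn, hn'⟩ := (hB.and hz0).exists
          by_contra hj
          push Not at hj
          exact hn.2.2.2 j hj.1 hj.2 hn'
    by_cases hcase : ∃ j, j ≠ i ∧ ∀ z, eval (δ z) (p j) = 0
    · -- the limit curve lies in a double line
      obtain ⟨j, hji, hδj⟩ := hcase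
      have hli : ∀ z, ℓ i (δ z) = 0 := fun z => by rw [← hℓ]; exact hδi z
      have hlj : ∀ z, ℓ j (δ z) = 0 := fun z => by rw [← hℓ]; exact hδj z
      have hnonzero : ∀ l, l ≠ i → l ≠ j → ¬ ∀ z, eval (δ z) (p l) = 0 := by
        intro l hl1 hl2 hall
        apply hδn
        obtain ⟨m, -, -, -, -, -, ⟨hm1, hm2, hm3⟩, -, -⟩ := three_others i j l
        have hll : ∀ z, ℓ l (δ z) = 0 := fun z => by rw [← hℓ]; exact hall z
        intro z w
        refine par_of_forms ![ℓ i, ℓ j, ℓ l, ℓ m] (fun v hv => ?_) (hli z) (hli w) (hlj z) (hlj w)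
          ?_ ?_
        · exact hquad i j l m hji.symm hl1.symm hm1.symm hl2.symm hm2.symm hm3.symm v
            (hv 0) (hv 1) (hv 2) (hv 3)
        · intro h0
          exact hδ.ne_zero w (hquad i j l m hji.symm hl1.symm hm1.symm hl2.symm hm2.symm hm3.symm _
            (hli w) (hlj w) (hll w) h0)
        · change ℓ l (δ z) * _ = ℓ l (δ w) * _
          rw [hll, hll, zero_mul, zero_mul]
      have hs : ∃ s : Fin 6, ∀ l, l ≠ i → l ≠ s → (i = σ 0 ∨ i = σ 1) →
          ¬ (l = σ 0 ∨ l = σ 1) := by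
        by_cases h0 : i = σ 0
        · refine ⟨σ 1, fun l h1 h2 _ h3 => ?_⟩
          rcases h3 with h3 | h3
          · exact h1 (h3.trans h0.symm)
          · exact h2 h3
        · refine ⟨σ 0, fun l h1 h2 h3 h4 => ?_⟩
          rcases h4 with h4 | h4
          · exact h2 h4
          · exact h1 (h4.trans (h3.resolve_left h0).symm)
      obtain ⟨s, hs⟩ := hs
      have homit : ∀ l, l ≠ i → l ≠ j → l ≠ s → ∀ z, ℓ l (δ z) ≠ 0 := by
        intro l h1 h2 h3 z h0
        rw [← hℓ] at h0
        rcases hlim z l h1 (hnonzero l h1 h2) h0 with hA | hB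
        · exact hsk_gen (δ z) (hδ.ne_zero z)
            ⟨i, j, l, hji.symm, h1.symm, h2.symm, hδi z, hδj z, h0⟩ hA.2
        · exact hs l h1 h3 hB.2.2.2.1 hB.2.2.2.2
      obtain ⟨a, b, c, hab, hac, hbc, ⟨a1, a2, a3⟩, ⟨b1, b2, b3⟩, ⟨c1, c2, c3⟩⟩ :=
        three_others i j s
      apply hδn
      exact picard_line hδ (ℓ i) (ℓ j) (ℓ a) (ℓ b) (ℓ c)
        (hquad i j a b hji.symm a1.symm b1.symm a2.symm b2.symm hab)
        (hquad i j a c hji.symm a1.symm c1.symm a2.symm c2.symm hac)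
        (hquad i j b c hji.symm b1.symm c1.symm b2.symm c2.symm hbc)
        hli hlj (homit a a1 a2 a3) (homit b b1 b2 b3) (homit c c1 c2 c3)
    · -- the limit curve contradicts the hypothesis
      push Not at hcase
      have hne : ∀ j, j ≠ i → ¬ ∀ z, eval (δ z) (p j) = 0 := by
        intro j hj h
        obtain ⟨z, hz⟩ := hcase j hj
        exact hz (h z)
      have hgood : ∀ (z : ℂ) (j : Fin 6), j ≠ i → eval (δ z) (p j) = 0 →
          (∃ e ∈ Δ, ∀ a ∈ e, eval (δ z) (p a) = 0) ∧ eval (δ z) sk = 0 := by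
        intro z j hj h0
        rcases hlim z j hj (hne j hj) h0 with hA | ⟨h1, h2, h3, hi, -⟩
        · exact hA
        · exfalso
          obtain ⟨l, hl0, hl1, hl⟩ := hQ2 _ h3
          have hli : l ≠ i := by
            rintro rfl
            rcases hi with hi | hi
            · exact hl0 hi
            · exact hl1 hi
          rcases hlim z l hli (hne l hli) hl with hA | hB
          · exact hsk_gen (δ z) (hδ.ne_zero z)
              ⟨σ 0, σ 1, l, hσ01, hl0.symm, hl1.symm, h1, h2, hl⟩ hA.2
          · rcases hB.2.2.2.2 with h | h
            · exact hl0 h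
            · exact hl1 h
      apply hδn
      intro z w
      have hiff : ∀ {d : ℕ} {P : MvPolynomial (Fin 4) ℂ}, P.IsHomogeneous d → ∀ z,
          (eval (Projectivization.mk ℂ (δ z) (hδ.ne_zero z)).rep P = 0 ↔ eval (δ z) P = 0) := by
        intro d P hP z
        obtain ⟨c, hc, he⟩ := rep_mk (hδ.ne_zero z)
        rw [he, eval_smul_zero hP hc]
      refine par_of_mk_eq (hδ.ne_zero z) (hδ.ne_zero w) (hhyp i _ hδ.holo ?_ ?_ z w)
      · intro z
        exact (hiff (hp_lin i) z).2 (hδi z)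
      · intro z j hj h0
        obtain ⟨⟨e, he, hev⟩, h1⟩ := hgood z j hj ((hiff (hp_lin j) z).1 h0)
        exact ⟨⟨e, he, fun a ha => (hiff (hp_lin a) z).2 (hev a ha)⟩, (hiff hsk_hom z).2 h1⟩
  choose ε₀ hpos hmain using main
  obtain ⟨i₀, hi₀⟩ := Finite.exists_min ε₀
  exact ⟨ε₀ i₀, hpos i₀, fun ε h0 h1 i => hmain i ε h0 (h1.trans_le (hi₀ i))⟩
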